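/- arXiv:2312.08681 — 2 statements merged into one kernel-verified Lean document; each statement's English description precedes it below -/
import Mathlib

section
/- Let F be a free group, let C and C' be subgroups of F each of which is a free factor of F (i.e. F decomposes as an internal free product C * D for some subgroup D, and likewise for C'), and let φ: C → C' be an isomorphism. Then the HNN extension F*_φ = ⟨F, t | t c t^{-1} = φ(c) for all c ∈ C⟩ is poly-free. -/
/-! Let `G = ⟨F, t | t c t⁻¹ = φ c⟩` and write `F = C * D = C' * E`. The kernel of the homomorphism
`G → ℤ` killing `F` and sending `t` to `1` is the amalgam of the conjugates `tⁿ F t⁻ⁿ` along a line.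
Each new conjugate is glued along a free factor, so it only adds a free complement: the kernel is
the free product of `F`, of the `t^(n+1) D t^-(n+1)` and of the `t^-(n+1) E t^(n+1)`, `n ∈ ℕ`.
It is therefore free, and `G` is free-by-cyclic.

The argument avoids normal forms. The abstract free product `Tower D E` of these pieces is free and
carries an explicit automorphism `shift`, extending `φ`, whose inverse `shiftInv` is given by the
mirror-image formulas. The assignment `F ↦ F`, `t ↦ t` defines a homomorphism
`toSemi : G → Tower D E ⋊ ⟨t⟩`, and sending each piece to the corresponding conjugate in `G`
provides a left inverse. Hence `toSemi` is injective, the kernel of `G → ⟨t⟩` embeds in the free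
group `Tower D E`, and it is free by Nielsen–Schreier. -/

/-- A group `G` is poly-free if it has a finite subnormal chain
`1 = G₀ ⊴ G₁ ⊴ ⋯ ⊴ Gₙ = G` whose successive quotients are free groups
(equivalently, each `Gᵢ₊₁` surjects onto a free group with kernel `Gᵢ`). -/
def IsPolyFree (G : Type u) [Group G] : Prop :=
  ∃ (n : ℕ) (s : Fin (n + 1) → Subgroup G),
    s 0 = ⊥ ∧ s (Fin.last n) = ⊤ ∧
    ∀ i : Fin n, s i.castSucc ≤ s i.succ ∧
      ∃ (ι : Type u) (f : ↥(s i.succ) →* FreeGroup ι),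
        Function.Surjective f ∧ f.ker = (s i.castSucc).subgroupOf (s i.succ)

/-- A subgroup `C` of `F` is a free factor if there is a subgroup `D` such that the
natural homomorphism `C * D →* F` from the free product is an isomorphism. -/
def IsFreeFactor {F : Type} [Group F] (C : Subgroup F) : Prop :=
  ∃ D : Subgroup F, Function.Bijective (Monoid.Coprod.lift C.subtype D.subtype)

namespace HNNPolyFree

open Monoid

/-- A group mapping onto a free group with free kernel is poly-free, by a chain of length two. -/
theorem isPolyFree_of_free_ker {G : Type} [Group G] {ι : Type} (f : G →* FreeGroup ι)
    (hf : Function.Surjective f) (hk : IsFreeGroup f.ker) : IsPolyFree G := by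
  obtain ⟨κ, ⟨b⟩⟩ := hk.nonempty_basis
  refine ⟨2, ![⊥, f.ker, ⊤], rfl, rfl, ?_⟩
  intro i
  fin_cases i
  · refine ⟨bot_le, κ, b.repr.toMonoidHom, b.repr.surjective, ?_⟩
    change b.repr.toMonoidHom.ker = (⊥ : Subgroup G).subgroupOf f.ker
    rw [Subgroup.bot_subgroupOf]
    exact (MonoidHom.ker_eq_bot_iff _).2 b.repr.injective
  · refine ⟨le_top, ι, f.comp (Subgroup.subtype ⊤), ?_, ?_⟩
    · intro y
      obtain ⟨x, rfl⟩ := hf y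
      exact ⟨⟨x, trivial⟩, rfl⟩
    · rfl

/-! ### Homomorphisms out of an internal free product -/

section Split

variable {F : Type} [Group F] {C D : Subgroup F} {N : Type} [Group N]

/-- The homomorphism out of `F = C * D` with prescribed restrictions to `C` and `D`. -/
noncomputable def splitLift (h : Function.Bijective (Coprod.lift C.subtype D.subtype))
    (f : C →* N) (g : D →* N) : F →* N :=
  (Coprod.lift f g).comp (MulEquiv.ofBijective _ h).symm.toMonoidHom

@[simp]
theorem splitLift_left (h : Function.Bijective (Coprod.lift C.subtype D.subtype))
    (f : C →* N) (g : D →* N) (c : C) : splitLift h f g c = f c := by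
  have : (MulEquiv.ofBijective _ h).symm (c : F) = Coprod.inl c := by
    rw [MulEquiv.symm_apply_eq]; simp
  simp [splitLift, this]

@[simp]
theorem splitLift_right (h : Function.Bijective (Coprod.lift C.subtype D.subtype))
    (f : C →* N) (g : D →* N) (d : D) : splitLift h f g d = g d := by
  have : (MulEquiv.ofBijective _ h).symm (d : F) = Coprod.inr d := by
    rw [MulEquiv.symm_apply_eq]; simp
  simp [splitLift, this]

theorem split_ext (h : Function.Bijective (Coprod.lift C.subtype D.subtype))
    {f g : F →* N} (hC : ∀ c : C, f c = g c) (hD : ∀ d : D, f d = g d) : f = g := by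
  have key : f.comp (Coprod.lift C.subtype D.subtype) = g.comp (Coprod.lift C.subtype D.subtype) :=
    Coprod.hom_ext (MonoidHom.ext hC) (MonoidHom.ext hD)
  exact (MonoidHom.cancel_right h.2).1 key

end Split

/-! ### The free product of the conjugates of the pieces -/

/-- Labels of the free factors of the kernel: `F` itself, the conjugates of `D` by positive powers
of `t`, and the conjugates of `E` by negative powers of `t`. -/
inductive Idx : Type
  | base : Idx
  | pos : ℕ → Idx
  | neg : ℕ → Idx

section Tower

variable {F : Type} [Group F]

/-- The group placed at each label, conjugated back into `F`. -/
def Piece (D E : Subgroup F) : Idx → Type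
  | .base => F
  | .pos _ => D
  | .neg _ => E

instance (D E : Subgroup F) : ∀ i, Group (Piece D E i)
  | .base => inferInstanceAs (Group F)
  | .pos _ => inferInstanceAs (Group D)
  | .neg _ => inferInstanceAs (Group E)

instance [IsFreeGroup F] (D E : Subgroup F) : ∀ i, IsFreeGroup (Piece D E i)
  | .base => inferInstanceAs (IsFreeGroup F)
  | .pos _ => inferInstanceAs (IsFreeGroup D)
  | .neg _ => inferInstanceAs (IsFreeGroup E)

/-- The free product of `F`, of `ℕ` copies of `D` and of `ℕ` copies of `E`; the copies numbered `n`
stand for `t^(n+1) D t^-(n+1)` and `t^-(n+1) E t^(n+1)`. -/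
abbrev Tower (D E : Subgroup F) : Type := CoprodI (Piece D E)

variable {D E : Subgroup F} {N : Type} [Group N]

/-- The inclusion of `F` in the tower. -/
def base : F →* Tower D E := CoprodI.of (M := Piece D E) (i := .base)

/-- The inclusion of the `n`-th copy of `D` in the tower. -/
def pos (n : ℕ) : D →* Tower D E := CoprodI.of (M := Piece D E) (i := .pos n)

/-- The inclusion of the `n`-th copy of `E` in the tower. -/
def neg (n : ℕ) : E →* Tower D E := CoprodI.of (M := Piece D E) (i := .neg n)

/-- The universal property of the tower. -/
def towerLift (f : F →* N) (g : ℕ → D →* N) (k : ℕ → E →* N) : Tower D E →* N :=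
  CoprodI.lift (M := Piece D E) fun
    | .base => f
    | .pos n => g n
    | .neg n => k n

@[simp]
theorem towerLift_base (f : F →* N) (g : ℕ → D →* N) (k : ℕ → E →* N) (x : F) :
    towerLift f g k (base x) = f x :=
  CoprodI.lift_of (M := Piece D E) (i := .base) _ _

@[simp]
theorem towerLift_pos (f : F →* N) (g : ℕ → D →* N) (k : ℕ → E →* N) (n : ℕ) (x : D) :
    towerLift f g k (pos n x) = g n x :=
  CoprodI.lift_of (M := Piece D E) (i := .pos n) _ _

@[simp]
theorem towerLift_neg (f : F →* N) (g : ℕ → D →* N) (k : ℕ → E →* N) (n : ℕ) (x : E) :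
    towerLift f g k (neg n x) = k n x :=
  CoprodI.lift_of (M := Piece D E) (i := .neg n) _ _

theorem tower_ext {f g : Tower D E →* N} (hb : f.comp base = g.comp base)
    (hp : ∀ n x, f (pos n x) = g (pos n x)) (hn : ∀ n x, f (neg n x) = g (neg n x)) : f = g := by
  apply CoprodI.ext_hom
  rintro (_ | n | n)
  · exact hb
  · exact MonoidHom.ext (hp n)
  · exact MonoidHom.ext (hn n)

end Tower

/-! ### The shift automorphism and the embedding of the HNN extension -/

section Shift

variable {F : Type} [Group F] {C C' D E : Subgroup F} (φ : C ≃* C')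
  (h : Function.Bijective (Coprod.lift C.subtype D.subtype))
  (hE : Function.Bijective (Coprod.lift C'.subtype E.subtype))

/-- Conjugation by `t`: on `F = C * D` it is `φ` on `C` and moves `D` to its first conjugate; every
conjugate moves up by one, the copy `t⁻¹ E t` landing in `F`. -/
noncomputable def shiftHom : Tower D E →* Tower D E :=
  towerLift (splitLift h (base.comp (C'.subtype.comp φ.toMonoidHom)) (pos 0))
    (fun n => pos (n + 1))
    (fun n => n.casesOn (base.comp E.subtype) (fun m => neg m))

/-- Conjugation by `t⁻¹`, the mirror image of `shiftHom`. -/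
noncomputable def shiftInv : Tower D E →* Tower D E :=
  towerLift (splitLift hE (base.comp (C.subtype.comp φ.symm.toMonoidHom)) (neg 0))
    (fun n => n.casesOn (base.comp D.subtype) (fun m => pos m))
    (fun n => neg (n + 1))

/-- The automorphism of the tower modelling conjugation by `t`. -/
noncomputable def shift : MulAut (Tower D E) :=
  MonoidHom.toMulEquiv (shiftHom φ h) (shiftInv φ hE)
    (by
      apply tower_ext
      · apply split_ext h <;> intro x <;> simp [shiftHom, shiftInv]
      · rintro n x
        simp [shiftHom, shiftInv]
      · rintro (_ | n) x <;> simp [shiftHom, shiftInv])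
    (by
      apply tower_ext
      · apply split_ext hE <;> intro x <;> simp [shiftHom, shiftInv]
      · rintro (_ | n) x <;> simp [shiftHom, shiftInv]
      · rintro n x
        simp [shiftHom, shiftInv])

theorem shift_apply (x : Tower D E) : shift φ h hE x = shiftHom φ h x := rfl

/-- The action of the infinite cyclic group, written as `FreeGroup Unit`, through `shift`. -/
noncomputable def shiftAction : FreeGroup Unit →* MulAut (Tower D E) :=
  FreeGroup.lift fun _ => shift φ h hE

/-- The homomorphism from the HNN extension to the semidirect product of the tower by `⟨t⟩`. -/
noncomputable def toSemi :
    HNNExtension F C C' φ →* SemidirectProduct (Tower D E) (FreeGroup Unit)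
      (shiftAction φ h hE) :=
  HNNExtension.lift (SemidirectProduct.inl.comp base) (SemidirectProduct.inr (FreeGroup.of ()))
    (by
      intro a
      have := SemidirectProduct.inl_aut (φ := shiftAction φ h hE) (FreeGroup.of ()) (base (a : F))
      have e : shiftAction φ h hE (FreeGroup.of ()) (base (a : F)) = base (φ a : F) := by
        simp [shiftAction, shift_apply, shiftHom]
      rw [e] at this
      simp [this])

/-- Conjugation by `g`, precomposed with `f`. -/
def conjHom {A G : Type} [Group A] [Group G] (g : G) (f : A →* G) : A →* G :=
  (MulAut.conj g).toMonoidHom.comp f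

@[simp]
theorem conjHom_apply {A G : Type} [Group A] [Group G] (g : G) (f : A →* G) (a : A) :
    conjHom g f a = g * f a * g⁻¹ := rfl

/-- The homomorphism from the tower to the HNN extension, sending each piece to the conjugate it
stands for. -/
def towerToHNN : Tower D E →* HNNExtension F C C' φ :=
  towerLift HNNExtension.of
    (fun n => conjHom (HNNExtension.t ^ (n + 1)) (HNNExtension.of.comp D.subtype))
    (fun n => conjHom (HNNExtension.t ^ (n + 1))⁻¹ (HNNExtension.of.comp E.subtype))

theorem towerToHNN_shift (x : Tower D E) :
    towerToHNN φ (shift φ h hE x) =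
      HNNExtension.t * towerToHNN φ x * (HNNExtension.t)⁻¹ := by
  have : (towerToHNN φ).comp (shiftHom φ h) =
      conjHom HNNExtension.t (towerToHNN (D := D) (E := E) φ) := by
    apply tower_ext
    · apply split_ext h <;> intro x
      · simp [shiftHom, towerToHNN, HNNExtension.equiv_eq_conj]
      · simp [shiftHom, towerToHNN]
    · intro n x
      simp only [shiftHom, towerToHNN, MonoidHom.comp_apply, towerLift_pos, conjHom_apply]
      rw [pow_succ' _ (n + 1)]
      group
    · rintro (_ | n) x
      · simp [shiftHom, towerToHNN, mul_assoc]
      · simp only [shiftHom, towerToHNN, MonoidHom.comp_apply, towerLift_neg, conjHom_apply]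
        rw [pow_succ _ (n + 1)]
        group
  exact DFunLike.congr_fun this x

/-- The left inverse of `toSemi`. -/
noncomputable def ofSemi :
    SemidirectProduct (Tower D E) (FreeGroup Unit) (shiftAction φ h hE) →*
      HNNExtension F C C' φ :=
  SemidirectProduct.lift (towerToHNN φ) (FreeGroup.lift fun _ => HNNExtension.t)
    (by
      intro g
      induction g using FreeGroup.induction_on with
      | C1 => ext; simp
      | of u =>
        refine MonoidHom.ext fun x => ?_
        simpa [shiftAction] using towerToHNN_shift φ h hE x
      | inv_of u ih =>
        refine MonoidHom.ext fun x => ?_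
        have := DFunLike.congr_fun ih ((shiftAction φ h hE (FreeGroup.of u))⁻¹ x)
        simp only [MonoidHom.comp_apply, MulEquiv.coe_toMonoidHom, MulAut.apply_inv_self] at this
        simp [this, MulAut.conj_apply, mul_assoc]
      | mul a b iha ihb =>
        refine MonoidHom.ext fun x => ?_
        have h1 := DFunLike.congr_fun iha (shiftAction φ h hE b x)
        have h2 := DFunLike.congr_fun ihb x
        simp only [MonoidHom.comp_apply, MulEquiv.coe_toMonoidHom] at h1 h2
        simp [h1, h2])

theorem ofSemi_toSemi (x : HNNExtension F C C' φ) : ofSemi φ h hE (toSemi φ h hE x) = x := by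
  have : (ofSemi φ h hE).comp (toSemi φ h hE) = MonoidHom.id _ := by
    apply HNNExtension.hom_ext
    · ext x
      simp [ofSemi, toSemi, towerToHNN]
    · simp [ofSemi, toSemi]
  exact DFunLike.congr_fun this x

end Shift

end HNNPolyFree

open HNNPolyFree in
/-- Let `F` be a free group, `C, C'` free factors of `F` and
`φ : C ≃ C'` an isomorphism. Then the HNN extension `F*_φ` is poly-free. -/
theorem hnn_of_freeFactors_polyFree (F : Type) [Group F]
    (hF : ∃ ι : Type, Nonempty (FreeGroup ι ≃* F))
    (C C' : Subgroup F) (hC : IsFreeFactor C) (hC' : IsFreeFactor C')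
    (φ : ↥C ≃* ↥C') :
    IsPolyFree (HNNExtension F C C' φ) := by
  obtain ⟨ι, ⟨e⟩⟩ := hF
  have : IsFreeGroup F := IsFreeGroup.ofMulEquiv e
  obtain ⟨D, h⟩ := hC
  obtain ⟨E, hE⟩ := hC'
  let p : HNNExtension F C C' φ →* FreeGroup Unit :=
    SemidirectProduct.rightHom.comp (toSemi φ h hE)
  have hp : Function.Surjective p := by
    have hs : p.comp (FreeGroup.lift fun _ => HNNExtension.t) = MonoidHom.id _ := by
      ext
      simp [p, toSemi]
    exact fun y => ⟨_, DFunLike.congr_fun hs y⟩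
  -- On the kernel of `p` the first coordinate of `toSemi` is multiplicative.
  let q : p.ker →* Tower D E :=
    { toFun := fun x => (toSemi φ h hE x).left
      map_one' := by simp
      map_mul' := by
        intro x y
        have hx : (toSemi φ h hE x).right = 1 := x.2
        simp [hx] }
  have hq : Function.Injective q := by
    intro x y hxy
    have hx : (toSemi φ h hE x).right = 1 := x.2
    have hy : (toSemi φ h hE y).right = 1 := y.2
    have : toSemi φ h hE x = toSemi φ h hE y := SemidirectProduct.ext hxy (hx.trans hy.symm)
    apply Subtype.ext
    rw [← ofSemi_toSemi φ h hE (x : HNNExtension F C C' φ), this, ofSemi_toSemi]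
  exact isPolyFree_of_free_ker p hp (IsFreeGroup.ofMulEquiv (MonoidHom.ofInjective hq).symm)
end

section
/- Let m and n be nonzero integers. The Baumslag–Solitar group BS(m,n) = ⟨a,t | t a^n t^{-1} = a^m⟩ is virtually poly-free if and only if m = n or m = -n. -/
/-- Generators: `0 ↦ a`, `1 ↦ t`. -/
def BS.a : FreeGroup (Fin 2) := FreeGroup.of 0
def BS.t : FreeGroup (Fin 2) := FreeGroup.of 1

/-- The Baumslag–Solitar group `BS(m,n) = ⟨a,t | t a^n t⁻¹ = a^m⟩`. -/
abbrev BS (m n : ℤ) : Type :=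
  PresentedGroup ({BS.t * BS.a ^ n * BS.t⁻¹ * (BS.a ^ m)⁻¹} : Set (FreeGroup (Fin 2)))

/-! ### Translation length in free groups -/

/-- The length of a cyclic reduction of the reduced word of `g`: the translation length of `g` on
the Cayley tree of the free group. -/
noncomputable def cyclicLength {ι : Type*} (g : FreeGroup ι) : ℕ :=
  open Classical in (FreeGroup.reduceCyclically g.toWord).length

/-- The length of the word conjugating `g` to its cyclic reduction. -/
noncomputable def conjugatorLength {ι : Type*} (g : FreeGroup ι) : ℕ :=
  open Classical in (FreeGroup.reduceCyclically.conjugator g.toWord).length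

open Classical in
theorem norm_zpow_eq {ι : Type*} (g : FreeGroup ι) {z : ℤ} (hz : z ≠ 0) :
    (g ^ z).norm = 2 * conjugatorLength g + z.natAbs * cyclicLength g := by
  have key : ∀ k : ℕ, k ≠ 0 →
      (g ^ k).norm = 2 * conjugatorLength g + k * cyclicLength g := by
    intro k hk
    simp only [FreeGroup.norm, FreeGroup.toWord_pow, conjugatorLength, cyclicLength]
    rw [FreeGroup.reduceCyclically.reduce_flatten_replicate FreeGroup.isReduced_toWord, if_neg hk]
    simp [FreeGroup.invRev_length]
    ring
  obtain ⟨k, rfl | rfl⟩ := z.eq_nat_or_neg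
  · simpa using key k (by simpa using hz)
  · simpa using key k (by simpa using hz)

open Classical in
theorem eq_one_of_cyclicLength_eq_zero {ι : Type*} {g : FreeGroup ι} (h : cyclicLength g = 0) :
    g = 1 := by
  have h' : FreeGroup.reduceCyclically g.toWord = [] := List.length_eq_zero_iff.1 h
  have := FreeGroup.reduceCyclically.conj_conjugator_reduceCyclically g.toWord
  rw [h', List.append_nil] at this
  rw [← FreeGroup.mk_toWord (x := g), ← this, ← FreeGroup.mul_mk, ← FreeGroup.inv_mk,
    mul_inv_cancel]

/-- Comparing the norms of `x ^ (n * j)` and `y ^ (m * j)` for `j = 1, 2` eliminates the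
contribution of the conjugators. -/
theorem cyclicLength_of_zpow_eq {ι : Type*} {x y : FreeGroup ι} {m n : ℤ} (hm : m ≠ 0)
    (hn : n ≠ 0) (h : x ^ n = y ^ m) :
    n.natAbs * cyclicLength x = m.natAbs * cyclicLength y := by
  classical
  have h1 := congrArg FreeGroup.norm h
  have h2 : (x ^ (n * 2)).norm = (y ^ (m * 2)).norm := by rw [zpow_mul, zpow_mul, h]
  rw [norm_zpow_eq _ hn, norm_zpow_eq _ hm] at h1
  rw [norm_zpow_eq _ (by simpa using hn), norm_zpow_eq _ (by simpa using hm)] at h2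
  simp only [Int.natAbs_mul, Int.reduceAbs] at h2
  rw [mul_right_comm, mul_right_comm m.natAbs] at h2
  lia

/-! ### Sequences satisfying the Baumslag–Solitar relation -/

theorem seq_zero_eq_zero {L : ℕ → ℕ} {p q : ℕ} (hq : 0 < q) (hqp : q < p)
    (h : ∀ k, p * L (k + 1) = q * L k) : L 0 = 0 := by
  by_contra h0
  have key : ∀ k, L k ≠ 0 ∧ L k + k ≤ L 0 := by
    intro k
    induction k with
    | zero => exact ⟨h0, le_rfl⟩
    | succ k ih =>
      have hk := h k
      have hne : L (k + 1) ≠ 0 := by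
        intro h'
        rw [h', mul_zero, eq_comm, mul_eq_zero] at hk
        exact hk.elim hq.ne' ih.1
      have hlt : L (k + 1) < L k := by
        by_contra hle
        have : q * L k < p * L (k + 1) :=
          Nat.mul_lt_mul_of_lt_of_le hqp (not_lt.1 hle) (Nat.pos_of_ne_zero hne)
        lia
      exact ⟨hne, by lia⟩
  have := (key (L 0 + 1)).2
  lia

theorem freeGroup_seq_eq_one {ι : Type*} {m n : ℤ} (hm : m ≠ 0) (hn : n ≠ 0)
    (hmn : m.natAbs ≠ n.natAbs) {b : ℤ → FreeGroup ι} (hb : ∀ i, b (i + 1) ^ n = b i ^ m) (i : ℤ) :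
    b i = 1 := by
  apply eq_one_of_cyclicLength_eq_zero
  have hL := fun j => cyclicLength_of_zpow_eq hm hn (hb j)
  have hm' := Int.natAbs_pos.2 hm
  have hn' := Int.natAbs_pos.2 hn
  rcases lt_or_gt_of_ne hmn with hlt | hlt
  · have := seq_zero_eq_zero (L := fun k => cyclicLength (b (i + k))) hm' hlt
      (fun k => by simpa [add_assoc] using hL (i + k))
    simpa using this
  ·
    -- In this case the lengths decrease in the negative direction.
    have := seq_zero_eq_zero (L := fun k => cyclicLength (b (i - k))) hn' hlt
      (fun k => by
        have := hL (i - (k + 1 : ℕ))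
        rw [show i - ((k + 1 : ℕ) : ℤ) + 1 = i - k by push_cast; ring] at this
        exact this.symm)
    simpa using this

/-- The sequence is pushed down the poly-free chain one free quotient at a time. A stable
letter conjugating `b i` to `b (i + 1)` may leave the chain at the first step and need not
normalise its lower terms; the relations between the `b i` survive in every term. -/
theorem IsPolyFree.seq_eq_one {G : Type*} [Group G] (hG : IsPolyFree G) {m n : ℤ} (hm : m ≠ 0)
    (hn : n ≠ 0) (hmn : m.natAbs ≠ n.natAbs) {b : ℤ → G} (hb : ∀ i, b (i + 1) ^ n = b i ^ m)
    (i : ℤ) : b i = 1 := by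
  obtain ⟨N, s, h0, h1, hs⟩ := hG
  have key : ∀ j : Fin (N + 1), ∀ i, b i ∈ s j := by
    intro j
    induction j using Fin.reverseInduction with
    | last => simp [h1]
    | cast j ih =>
      obtain ⟨-, ι, f, -, hker⟩ := hs j
      intro i
      have h := freeGroup_seq_eq_one hm hn hmn (b := fun i => f ⟨b i, ih i⟩)
        (fun i => by
          rw [← map_zpow, ← map_zpow]
          exact congrArg f (Subtype.ext (hb i))) i
      rwa [← MonoidHom.mem_ker, hker, Subgroup.mem_subgroupOf] at h
  simpa [h0] using key 0 i

/-! ### Generators and homomorphisms of Baumslag–Solitar groups -/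

namespace BS

variable {m n : ℤ}

/-- The image of the generator `a` in `BS m n`. -/
def A (m n : ℤ) : BS m n := PresentedGroup.of 0

/-- The image of the stable letter `t` in `BS m n`. -/
def T (m n : ℤ) : BS m n := PresentedGroup.of 1

theorem rel (m n : ℤ) : T m n * A m n ^ n * (T m n)⁻¹ = A m n ^ m :=
  mul_inv_eq_one.1 (PresentedGroup.one_of_mem (Set.mem_singleton _))

/-- The homomorphism out of `BS m n` determined by a pair of elements satisfying the relation. -/
def lift {G : Type*} [Group G] (x y : G) (h : y * x ^ n * y⁻¹ = x ^ m) : BS m n →* G :=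
  PresentedGroup.toGroup (f := ![x, y]) (by
    rintro r rfl
    simp [BS.a, BS.t, h])

@[simp]
theorem lift_A {G : Type*} [Group G] (x y : G) (h : y * x ^ n * y⁻¹ = x ^ m) :
    lift x y h (A m n) = x := PresentedGroup.toGroup.of _

@[simp]
theorem lift_T {G : Type*} [Group G] (x y : G) (h : y * x ^ n * y⁻¹ = x ^ m) :
    lift x y h (T m n) = y := PresentedGroup.toGroup.of _

theorem hom_ext {G : Type*} [Group G] {f g : BS m n →* G} (hA : f (A m n) = g (A m n))
    (hT : f (T m n) = g (T m n)) : f = g :=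
  PresentedGroup.ext (Fin.forall_fin_two.2 ⟨hA, hT⟩)

theorem eq_top_of_mem {H : Subgroup (BS m n)} (hA : A m n ∈ H) (hT : T m n ∈ H) : H = ⊤ :=
  H.eq_top_iff'.2 (PresentedGroup.generated_by _ H (Fin.forall_fin_two.2 ⟨hA, hT⟩))

/-- The generator `a` has infinite order, because it acts as the translation `x ↦ x + 1` when
`BS m n` acts on `ℚ` by affine maps, with `t` acting as `x ↦ (m / n) * x`. -/
theorem A_zpow_ne_one (hm : m ≠ 0) (hn : n ≠ 0) {k : ℤ} (hk : k ≠ 0) : A m n ^ k ≠ 1 := by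
  have hm' : (m : ℚ) ≠ 0 := by exact_mod_cast hm
  have hn' : (n : ℚ) ≠ 0 := by exact_mod_cast hn
  let x : Equiv.Perm ℚ := Equiv.addRight 1
  let y : Equiv.Perm ℚ := Equiv.mulRight₀ ((m : ℚ) / n) (div_ne_zero hm' hn')
  have hx : ∀ k : ℤ, x ^ k = Equiv.addRight (k : ℚ) := fun k => by
    simp [x]
  have h : y * x ^ n * y⁻¹ = x ^ m := by
    rw [mul_inv_eq_iff_eq_mul, hx, hx]
    ext q
    change (q + n) * ((m : ℚ) / n) = q * ((m : ℚ) / n) + m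
    field_simp
  intro hA
  have := congrArg (lift x y h) hA
  rw [map_zpow, lift_A, map_one, hx] at this
  have := congrArg (fun e : Equiv.Perm ℚ => e 0) this
  simp [hk] at this

end BS

/-! ### The case of distinct absolute values -/

theorem natAbs_eq_of_virtually_polyFree {m n : ℤ} (hm : m ≠ 0) (hn : n ≠ 0)
    {H : Subgroup (BS m n)} (hH : H.index ≠ 0) (hpf : IsPolyFree ↥H) : m.natAbs = n.natAbs := by
  by_contra hmn
  -- Passing to the normal core makes all conjugates of a power of `a` lie in `H`.
  have hcore : H.normalCore.index ≠ 0 := by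
    have : H.FiniteIndex := ⟨hH⟩
    exact Subgroup.FiniteIndex.index_ne_zero
  obtain ⟨k, hk, -, hkH⟩ := Subgroup.exists_pow_mem_of_index_ne_zero hcore (BS.A m n)
  have hmem : ∀ i : ℤ, BS.T m n ^ i * BS.A m n ^ k * (BS.T m n ^ i)⁻¹ ∈ H := fun i =>
    H.normalCore_le (H.normalCore_normal.conj_mem _ hkH _)
  have h := hpf.seq_eq_one hm hn hmn (b := fun i => ⟨_, hmem i⟩) (fun i => by
    apply Subtype.ext
    have hr : BS.T m n * (BS.A m n ^ k) ^ n * (BS.T m n)⁻¹ = (BS.A m n ^ k) ^ m := by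
      rw [← zpow_natCast, zpow_comm, ← conj_zpow, BS.rel, zpow_comm]
    simp only [SubgroupClass.coe_zpow, conj_zpow]
    rw [← hr, zpow_add_one]
    group) 0
  have h := congrArg Subtype.val h
  simp only [zpow_zero, one_mul, inv_one, mul_one, OneMemClass.coe_one] at h
  exact BS.A_zpow_ne_one hm hn (k := k) (by exact_mod_cast hk.ne') (by simpa using h)

/-! ### The case of equal absolute values -/

theorem isPolyFree_of_ker_eq_zpowers {G ι : Type u} [Group G] (f : G →* FreeGroup ι)
    (hf : Function.Surjective f) {z : G} (hz : ¬ IsOfFinOrder z)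
    (hker : f.ker = Subgroup.zpowers z) : IsPolyFree G := by
  have : Infinite (Subgroup.zpowers z) :=
    Set.infinite_coe_iff.2 (infinite_zpowers.2 hz)
  let e : Subgroup.zpowers z ≃* FreeGroup PUnit.{u + 1} :=
    mulEquivOfCyclicCardEq (by simp)
  refine ⟨2, ![⊥, Subgroup.zpowers z, ⊤], rfl, rfl, Fin.forall_fin_two.2 ⟨⟨bot_le, ?_⟩, le_top, ?_⟩⟩
  · refine ⟨PUnit, e.toMonoidHom, e.surjective, ?_⟩
    change e.toMonoidHom.ker = (⊥ : Subgroup G).subgroupOf (Subgroup.zpowers z)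
    rw [Subgroup.bot_subgroupOf, MonoidHom.ker_eq_bot_iff]
    exact e.injective
  · refine ⟨ι, f.comp (⊤ : Subgroup G).subtype, ?_, ?_⟩
    · intro w
      obtain ⟨g, rfl⟩ := hf w
      exact ⟨⟨g, trivial⟩, rfl⟩
    · change _ = (Subgroup.zpowers z).subgroupOf ⊤
      rw [← hker]
      rfl

/-- The action of the cyclic group of order `N` on the free group with basis `ZMod N` by cyclically
permuting the basis. -/
def cyclicAction (N : ℕ) : Multiplicative (ZMod N) →* MulAut (FreeGroup (ZMod N)) where
  toFun c := FreeGroup.freeGroupCongr (Equiv.addLeft c.toAdd)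
  map_one' := by
    ext w
    simp
  map_mul' c d := by
    ext w
    simp [FreeGroup.map.comp, Function.comp_def]

@[simp]
theorem cyclicAction_of {N : ℕ} (c : Multiplicative (ZMod N)) (i : ZMod N) :
    cyclicAction N c (FreeGroup.of i) = FreeGroup.of (c.toAdd + i) := rfl

/-- The semidirect product of the free group of rank `N` with a cyclic group of order `N` permuting
the basis; this is the free product `ℤ * ℤ/N`. -/
abbrev Model (N : ℕ) := FreeGroup (ZMod N) ⋊[cyclicAction N] Multiplicative (ZMod N)

namespace BS

variable {m n : ℤ}

theorem zpowers_normal (h : m = n ∨ m = -n) : (Subgroup.zpowers (A m n ^ n)).Normal := by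
  rw [← Subgroup.normalizer_eq_top_iff]
  apply eq_top_of_mem <;>
    rw [Subgroup.mem_normalizer_iff_map_conj_eq, MonoidHom.map_zpowers] <;>
    simp only [MonoidHom.coe_coe, MulAut.conj_apply]
  · rw [(Commute.self_zpow _ _).eq, mul_inv_cancel_right]
  · rw [rel]
    rcases h with rfl | rfl
    · rfl
    · exact (congrArg _ (zpow_neg _ _)).trans Subgroup.zpowers_inv

theorem model_zpow (z : ℤ) (N : ℕ) (h : z.natAbs = N) :
    (SemidirectProduct.inr (Multiplicative.ofAdd 1) : Model N) ^ z = 1 := by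
  rw [← map_zpow, ← ofAdd_zsmul]
  have : z • (1 : ZMod N) = 0 := by
    rw [zsmul_one, ZMod.intCast_zmod_eq_zero_iff_dvd, ← h]
    exact Int.natAbs_dvd.2 dvd_rfl
  rw [this]
  simp

/-- The quotient map of `BS m n`, `m = ±n`, by the normal subgroup generated by `a ^ n`, where the
quotient is identified with the semidirect product `Model |n|`. -/
def toModel (h : m.natAbs = n.natAbs) : BS m n →* Model n.natAbs :=
  lift (SemidirectProduct.inr (Multiplicative.ofAdd 1)) (SemidirectProduct.inl (FreeGroup.of 0))
    (by rw [model_zpow n _ rfl, model_zpow m _ h, mul_one, mul_inv_cancel])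

/-- The kernel is no larger than `⟨a ^ n⟩` because the quotient map by `⟨a ^ n⟩` factors
through `toModel`: send the `i`-th basis element of the free group to `a ^ i * t * a ^ (-i)` and the
generator of the cyclic group to `a`. -/
theorem ker_toModel (h : m.natAbs = n.natAbs) :
    (toModel h).ker = Subgroup.zpowers (A m n ^ n) := by
  have := zpowers_normal (Int.natAbs_eq_natAbs_iff.1 h)
  apply le_antisymm
  · let Q := BS m n ⧸ Subgroup.zpowers (A m n ^ n)
    let q : BS m n →* Q := QuotientGroup.mk' _
    have hq : q (A m n) ^ (n.natAbs : ℤ) = 1 := by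
      have : q (A m n) ^ n = 1 := by
        rw [← map_zpow]
        exact (QuotientGroup.eq_one_iff _).2 (Subgroup.mem_zpowers _)
      rwa [zpow_natCast, pow_natAbs_eq_one]
    let e : {f : ℤ →+ Additive Q // f n.natAbs = 0} :=
      ⟨zmultiplesHom (Additive Q) (Additive.ofMul (q (A m n))), by
        rw [zmultiplesHom_apply, ← ofMul_zpow, hq, ofMul_one]⟩
    let fg : Multiplicative (ZMod n.natAbs) →* Q := 
      AddMonoidHom.toMultiplicativeLeft (ZMod.lift n.natAbs e)
    have hfg : fg (Multiplicative.ofAdd 1) = q (A m n) := by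
      change Additive.toMul (ZMod.lift n.natAbs e 1) = _
      have := ZMod.lift_coe n.natAbs e 1
      rw [Int.cast_one] at this
      rw [this]
      simp [e]
    let fn : FreeGroup (ZMod n.natAbs) →* Q := FreeGroup.lift fun i =>
      fg (Multiplicative.ofAdd i) * q (T m n) * (fg (Multiplicative.ofAdd i))⁻¹
    let g : Model n.natAbs →* Q := SemidirectProduct.lift fn fg (fun c => by
      ext i
      simp only [fn, MonoidHom.comp_apply, MulEquiv.coe_toMonoidHom, cyclicAction_of,
        FreeGroup.lift_apply_of, ofAdd_add, ofAdd_toAdd, map_mul, MulAut.conj_apply]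
      group)
    have hg : g.comp (toModel h) = q := by
      apply hom_ext
      · simp [toModel, g, hfg]
      · simp [toModel, g, fn]
    intro x hx
    rw [← QuotientGroup.eq_one_iff]
    change q x = 1
    rw [← hg, MonoidHom.comp_apply, MonoidHom.mem_ker.1 hx, map_one]
  · rw [Subgroup.zpowers_le, MonoidHom.mem_ker, map_zpow, toModel, lift_A]
    exact model_zpow n _ rfl

theorem exists_polyFree (hm : m ≠ 0) (hn : n ≠ 0) (h : m.natAbs = n.natAbs) :
    ∃ H : Subgroup (BS m n), H.index ≠ 0 ∧ IsPolyFree ↥H := by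
  have : NeZero n.natAbs := ⟨by simpa using hn⟩
  let r : BS m n →* Multiplicative (ZMod n.natAbs) := SemidirectProduct.rightHom.comp (toModel h)
  refine ⟨r.ker, ?_, ?_⟩
  · rw [Subgroup.index_ker]
    exact Nat.card_pos.ne'
  have hr : ∀ x : r.ker, (toModel h x).right = 1 := fun x => x.2
  let f : r.ker →* FreeGroup (ZMod n.natAbs) :=
    { toFun x := (toModel h x).left
      map_one' := by simp
      map_mul' x y := by simp [hr] }
  have hf : ∀ x, SemidirectProduct.inl (f x) = toModel h x := fun x => by
    ext
    · rfl
    · exact (hr x).symm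
  have hA : A m n ^ n ∈ (toModel h).ker := ker_toModel h ▸ Subgroup.mem_zpowers _
  have hAr : A m n ^ n ∈ r.ker := by
    rw [MonoidHom.mem_ker, MonoidHom.comp_apply, MonoidHom.mem_ker.1 hA, map_one]
  refine isPolyFree_of_ker_eq_zpowers f ?_ (z := ⟨A m n ^ n, hAr⟩) ?_ ?_
  · rw [← MonoidHom.range_eq_top, eq_top_iff, ← FreeGroup.closure_range_of, Subgroup.closure_le]
    rintro _ ⟨i, rfl⟩
    have hi : toModel h (A m n ^ i.val * T m n * (A m n ^ i.val)⁻¹) =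
        SemidirectProduct.inl (FreeGroup.of i) := by
      have : (Multiplicative.ofAdd (1 : ZMod n.natAbs)) ^ i.val = Multiplicative.ofAdd i := by
        rw [← ofAdd_nsmul]
        simp
      simp only [toModel, map_mul, map_inv, map_pow, lift_A, lift_T]
      rw [← map_pow, this, ← map_inv, ← SemidirectProduct.inl_aut]
      simp
    refine ⟨⟨A m n ^ i.val * T m n * (A m n ^ i.val)⁻¹, ?_⟩, ?_⟩
    · rw [MonoidHom.mem_ker, MonoidHom.comp_apply, hi, SemidirectProduct.rightHom_inl]
    · exact SemidirectProduct.inl_injective ((hf _).trans hi)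
  · rw [isOfFinOrder_iff_zpow_eq_one]
    rintro ⟨k, hk, h1⟩
    have h1 := congrArg Subtype.val h1
    simp only [SubgroupClass.coe_zpow, OneMemClass.coe_one, ← zpow_mul] at h1
    exact A_zpow_ne_one hm hn (mul_ne_zero hn hk) h1
  · ext x
    have : x ∈ f.ker ↔ (x : BS m n) ∈ (toModel h).ker := by
      rw [MonoidHom.mem_ker, MonoidHom.mem_ker, ← hf, map_eq_one_iff _
        SemidirectProduct.inl_injective]
    rw [this, ker_toModel, Subgroup.mem_zpowers_iff, Subgroup.mem_zpowers_iff]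
    simp [Subtype.ext_iff]

end BS

/-- For nonzero integers `m, n`, the Baumslag–Solitar group
`BS(m,n)` is virtually poly-free if and only if `m = n` or `m = -n`. -/
theorem bs_virtually_polyFree_iff (m n : ℤ) (hm : m ≠ 0) (hn : n ≠ 0) :
    (∃ H : Subgroup (BS m n), H.index ≠ 0 ∧ IsPolyFree ↥H) ↔ (m = n ∨ m = -n) := by
  rw [← Int.natAbs_eq_natAbs_iff]
  exact ⟨fun ⟨_, hH, hpf⟩ => natAbs_eq_of_virtually_polyFree hm hn hH hpf,
    BS.exists_polyFree hm hn⟩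
end
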